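/- For every odd prime p, if G is a finite simple graph such that for every k the number of independent sets of size k in G equals the number of independent sets of size k in the cycle C_p, then G is isomorphic to C_p or G is isomorphic to D_p. -/

import Mathlib

open SimpleGraph Polynomial Finset

/-- The number of independent sets of size `k` in the graph `G`. -/
noncomputable def indepCount {V : Type*} [Fintype V] (G : SimpleGraph V) (k : ℕ) : ℕ :=
  Nat.card {s : Finset V // s.card = k ∧ ∀ u ∈ s, ∀ v ∈ s, ¬ G.Adj u v}

/-- The graph `D_n`: a triangle on the vertices `0, 1, 2` together with the
pendant path `2 - 3 - ⋯ - (n-1)`. -/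
def dGraph (n : ℕ) : SimpleGraph (Fin n) :=
  SimpleGraph.fromRel (fun u v =>
    (u.val = 0 ∧ v.val = 1) ∨ (u.val = 0 ∧ v.val = 2) ∨ (u.val = 1 ∧ v.val = 2) ∨
    (2 ≤ u.val ∧ v.val = u.val + 1))

/-!
Write `i_k` for the number of independent sets of size `k`. In a vertex-transitive graph, double
counting shows that the number of vertices divides `k * i_k`; as `i_k(C_p) = 0` for `k ≥ p`, a prime
`p` divides `i_k(C_p)` for every `k ≠ 0` and the independence polynomial of `G` is `1` modulo `p`.
If `G` were disconnected, a union of components would have an independence polynomial that is a unit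
modulo `p`, hence constant there, although its linear coefficient, a number of vertices, lies
strictly between `0` and `p`.

So `G` is connected, and `i_1` and `i_2` show that it has as many edges as vertices; removing an
edge of a triangle leaves a tree, so there is at most one triangle. Goodman's identity, which counts
the monochromatic triangles of a two-colouring of the complete graph by degrees, turns `i_3` into
`∑ (d(v) - 1) (d(v) - 2) ≤ 2 t` with `t` the number of triangles. If `t = 0`, all degrees are `2`
and `G` is a cycle. If `t = 1`, only one vertex may have degree `3` and no degree is larger;
removing an edge of the triangle at that vertex leaves a connected graph of maximum degree `2` with
a leaf, which is a path, and `G` is `D_p`.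
-/

section IndepCount

variable {V W : Type*}

theorem isNIndepSet_finsetCongr {G : SimpleGraph V} {H : SimpleGraph W} (e : G ≃g H) {k : ℕ}
    {s : Finset V} :
    H.IsNIndepSet k (e.toEquiv.finsetCongr s) ↔ G.IsNIndepSet k s := by
  rw [isNIndepSet_iff, isNIndepSet_iff, Equiv.finsetCongr_apply, card_map, coe_map, IsIndepSet,
    IsIndepSet, (e.toEquiv.toEmbedding.injective.injOn).pairwise_image]
  simp only [Set.Pairwise, Function.onFun, Equiv.coe_toEmbedding, RelIso.coe_fn_toEquiv,
    e.map_adj_iff]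

variable [Fintype V] [Fintype W]

theorem indepCount_eq_card_cliqueFinset_compl [DecidableEq V] (G : SimpleGraph V)
    [DecidableRel G.Adj] (k : ℕ) : indepCount G k = #(Gᶜ.cliqueFinset k) := by
  rw [indepCount, Nat.card_eq_fintype_card, Fintype.card_subtype]
  congr 1 with s
  rw [mem_filter_univ, mem_cliqueFinset_iff, isNClique_compl, isNIndepSet_iff, and_comm]
  refine and_congr_left' ⟨fun h u hu v hv _ => h u hu v hv, fun h u hu v hv huv => ?_⟩
  exact h hu hv huv.ne huv

theorem indepCount_zero (G : SimpleGraph V) : indepCount G 0 = 1 := by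
  classical
  rw [indepCount_eq_card_cliqueFinset_compl, card_eq_one]
  exact ⟨∅, by ext s; simp [isNClique_zero]⟩

theorem indepCount_one (G : SimpleGraph V) : indepCount G 1 = Fintype.card V := by
  classical
  rw [indepCount_eq_card_cliqueFinset_compl, ← card_univ]
  refine (card_bij (fun v _ => {v}) (fun v _ => ?_) (fun u _ v _ => ?_) fun s hs => ?_).symm
  · simp
  · exact fun huv => singleton_injective huv
  · obtain ⟨v, rfl⟩ := isNClique_one.1 (mem_cliqueFinset_iff.1 hs)
    exact ⟨v, mem_univ v, rfl⟩

theorem card_cliqueFinset_two [DecidableEq V] (G : SimpleGraph V) [DecidableRel G.Adj] :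
    #(G.cliqueFinset 2) = #G.edgeFinset := by
  refine (card_bij (fun e _ => e.toFinset) ?_ (fun e _ e' _ h => ?_) fun s hs => ?_).symm
  · rintro ⟨u, v⟩ huv
    have huv : G.Adj u v := by simpa using huv
    rw [mem_cliqueFinset_iff, isNClique_iff]
    refine ⟨?_, Sym2.card_toFinset_of_not_isDiag _ huv.ne⟩
    simpa [Sym2.toFinset_mk_eq, isClique_pair] using fun _ => huv
  · exact Sym2.ext fun v => by rw [← Sym2.mem_toFinset, h, Sym2.mem_toFinset]
  · obtain ⟨hclique, hcard⟩ := mem_cliqueFinset_iff.1 hs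
    obtain ⟨u, v, huv, rfl⟩ := card_eq_two.1 hcard
    exact ⟨s(u, v), by simpa using hclique (by simp) (by simp) huv, Sym2.toFinset_mk_eq⟩

theorem card_edgeFinset_add_indepCount_two (G : SimpleGraph V) [DecidableRel G.Adj] :
    #G.edgeFinset + indepCount G 2 = (Fintype.card V).choose 2 := by
  classical
  rw [indepCount_eq_card_cliqueFinset_compl, card_cliqueFinset_two,
    ← card_union_of_disjoint (disjoint_edgeFinset.2 disjoint_compl_right), ← edgeFinset_sup,
    ← card_edgeFinset_top_eq_card_choose_two]
  congr! 2
  exact sup_compl_eq_top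

theorem indepCount_congr {G : SimpleGraph V} {H : SimpleGraph W} (e : G ≃g H)
    (k : ℕ) : indepCount G k = indepCount H k := by
  classical
  rw [indepCount_eq_card_cliqueFinset_compl, indepCount_eq_card_cliqueFinset_compl]
  refine card_equiv e.toEquiv.finsetCongr fun s => ?_
  simp only [mem_cliqueFinset_iff, isNClique_compl, isNIndepSet_finsetCongr]

end IndepCount

section Goodman

variable {V : Type*} [Fintype V] [DecidableEq V]

theorem card_filter_triple_eq {s : Finset V} (hs : #s = 3) :
    #{t : V × V × V | {t.1, t.2.1, t.2.2} = s} = 6 := by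
  obtain ⟨a, b, c, hab, hac, hbc, rfl⟩ := card_eq_three.1 hs
  have orderings : ({t : V × V × V | {t.1, t.2.1, t.2.2} = ({a, b, c} : Finset V)} :
      Finset (V × V × V)) = {(a, b, c), (a, c, b), (b, a, c), (b, c, a), (c, a, b), (c, b, a)} := by
    ext ⟨x, y, z⟩
    simp only [mem_filter_univ, mem_insert, mem_singleton, Prod.mk.injEq, Finset.ext_iff]
    refine ⟨fun h => ?_, by grind⟩
    have hx := h x
    have hy := h y
    have hz := h z
    have ha := h a
    have hb := h b
    have hc := h c
    grind
  rw [orderings]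
  grind

theorem trace_adjMatrix_pow_three (G : SimpleGraph V) [DecidableRel G.Adj] :
    (G.adjMatrix ℤ ^ 3).trace = 6 * #(G.cliqueFinset 3) := by
  have fiber : ∀ s ∈ G.cliqueFinset 3,
      #{t ∈ ({t : V × V × V | G.IsNClique 3 {t.1, t.2.1, t.2.2}} : Finset (V × V × V)) |
        {t.1, t.2.1, t.2.2} = s} = 6 := by
    intro s hs
    rw [mem_cliqueFinset_iff] at hs
    rw [← card_filter_triple_eq hs.card_eq, filter_filter]
    congr 1 with t
    simp only [mem_filter_univ, and_iff_right_iff_imp]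
    rintro rfl
    exact hs
  have card_triples := card_eq_sum_card_fiberwise (t := G.cliqueFinset 3)
    (s := ({t : V × V × V | G.IsNClique 3 {t.1, t.2.1, t.2.2}} : Finset (V × V × V)))
    (f := fun t => {t.1, t.2.1, t.2.2}) fun t ht => by simpa using ht
  rw [sum_const_nat fiber] at card_triples
  rw [mul_comm, ← Nat.cast_ofNat (R := ℤ), ← Nat.cast_mul, ← card_triples, natCast_card_filter]
  simp only [pow_three, Matrix.trace, Matrix.diag_apply, Matrix.mul_apply, adjMatrix_apply,
    Fintype.sum_prod_type, is3Clique_triple_iff, mul_sum]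
  refine sum_congr rfl fun x _ => sum_congr rfl fun y _ => sum_congr rfl fun z _ => ?_
  simp only [G.adj_comm z x]
  split_ifs <;> simp_all

theorem trace_adjMatrix_mul_compl_mul_top (G : SimpleGraph V) [DecidableRel G.Adj] :
    (G.adjMatrix ℤ * Gᶜ.adjMatrix ℤ * (completeGraph V).adjMatrix ℤ).trace =
      ∑ v, (G.degree v * Gᶜ.degree v : ℤ) := by
  have trace_mul : (G.adjMatrix ℤ * Gᶜ.adjMatrix ℤ).trace = 0 := by
    refine sum_eq_zero fun u _ => ?_
    rw [Matrix.diag_apply, Matrix.mul_apply]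
    refine sum_eq_zero fun v _ => ?_
    by_cases huv : G.Adj u v <;> simp [huv, G.adj_comm v u]
  have all_ones : (Matrix.of 1 : Matrix V V ℤ) = Matrix.vecMulVec 1 1 := by
    ext; simp [Matrix.vecMulVec_apply]
  rw [adjMatrix_completeGraph_eq_of_one_sub_one, Matrix.mul_sub, Matrix.trace_sub, mul_one,
    trace_mul, sub_zero, all_ones, Matrix.mul_vecMulVec, Matrix.trace_vecMulVec,
    ← Matrix.mulVec_mulVec, dotProduct_comm, Matrix.dotProduct_mulVec]
  refine sum_congr rfl fun v _ => ?_
  rw [adjMatrix_vecMul_apply, adjMatrix_mulVec_apply]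
  simp

theorem trace_add_pow_three {R : Type*} [CommRing R] (A B : Matrix V V R) :
    ((A + B) ^ 3).trace = (A ^ 3).trace + (B ^ 3).trace + 3 * (A * B * (A + B)).trace := by
  have aba : (A * (B * A)).trace = (A * (A * B)).trace := Matrix.trace_mul_cycle' A B A
  have baa : (B * (A * A)).trace = (A * (B * A)).trace := Matrix.trace_mul_cycle' B A A
  have bab : (B * (A * B)).trace = (B * (B * A)).trace := Matrix.trace_mul_cycle' B A B
  have abb : (A * (B * B)).trace = (B * (A * B)).trace := Matrix.trace_mul_cycle' A B B
  simp only [pow_three, add_mul, mul_add, Matrix.trace_add, mul_assoc, aba, baa, bab, abb]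
  ring

theorem goodman_identity (G : SimpleGraph V) [DecidableRel G.Adj] :
    2 * (#(G.cliqueFinset 3) + indepCount G 3) + ∑ v, G.degree v * Gᶜ.degree v =
      2 * (Fintype.card V).choose 3 := by
  have card_triples : #((completeGraph V).cliqueFinset 3) = (Fintype.card V).choose 3 := by
    rw [← card_univ, ← card_powersetCard]
    congr 1 with s
    rw [mem_cliqueFinset_iff, isNClique_iff, mem_powersetCard]
    simp
  have trace_sum := trace_add_pow_three (G.adjMatrix ℤ) (Gᶜ.adjMatrix ℤ)
  rw [isCompl_compl.adjMatrix_add_adjMatrix_eq_adjMatrix_completeGraph ℤ,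
    trace_adjMatrix_mul_compl_mul_top] at trace_sum
  simp only [trace_adjMatrix_pow_three, card_triples,
    ← indepCount_eq_card_cliqueFinset_compl] at trace_sum
  zify
  linarith

theorem sum_degree_sq_add (G : SimpleGraph V) [DecidableRel G.Adj] :
    ∑ v, G.degree v ^ 2 + 2 * #G.edgeFinset + 2 * (Fintype.card V).choose 3 =
      2 * Fintype.card V * #G.edgeFinset + 2 * (#(G.cliqueFinset 3) + indepCount G 3) := by
  have degree_mul (v : V) :
      G.degree v ^ 2 + G.degree v + G.degree v * Gᶜ.degree v = Fintype.card V * G.degree v := by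
    have degree_add : G.degree v + Gᶜ.degree v + 1 = Fintype.card V := by
      have := G.degree_lt_card_verts v
      rw [degree_compl]
      omega
    rw [← degree_add]
    ring
  have sum_degree_mul := sum_congr rfl fun v (_ : v ∈ univ) => degree_mul v
  rw [sum_add_distrib, sum_add_distrib, ← mul_sum, sum_degrees_eq_twice_card_edges]
    at sum_degree_mul
  linarith [goodman_identity G]

end Goodman

section VertexTransitive

variable {V : Type*} [Fintype V]

theorem card_dvd_mul_indepCount (G : SimpleGraph V) [MulAction.IsPretransitive (G ≃g G) V]
    (k : ℕ) : Fintype.card V ∣ k * indepCount G k := by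
  classical
  have card_through_smul (e : G ≃g G) (v : V) :
      #{s ∈ Gᶜ.cliqueFinset k | e • v ∈ s} = #{s ∈ Gᶜ.cliqueFinset k | v ∈ s} := by
    refine (card_equiv e.toEquiv.finsetCongr fun s => ?_).symm
    rw [mem_filter, mem_filter, mem_cliqueFinset_iff, mem_cliqueFinset_iff, isNClique_compl,
      isNClique_compl, isNIndepSet_finsetCongr, Equiv.finsetCongr_apply]
    exact and_congr_right' (mem_map' e.toEquiv.toEmbedding).symm
  obtain ⟨n, hn⟩ : ∃ n, ∀ v, #{s ∈ Gᶜ.cliqueFinset k | v ∈ s} = n := by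
    obtain _ | ⟨⟨v⟩⟩ := isEmpty_or_nonempty V
    · exact ⟨0, isEmptyElim⟩
    · refine ⟨#{s ∈ Gᶜ.cliqueFinset k | v ∈ s}, fun u => ?_⟩
      obtain ⟨e, rfl⟩ := MulAction.exists_smul_eq (G ≃g G) v u
      exact card_through_smul e v
  refine ⟨n, ?_⟩
  rw [← sum_card hn, indepCount_eq_card_cliqueFinset_compl, mul_comm]
  exact (sum_const_nat fun s hs => (mem_cliqueFinset_iff.1 hs).card_eq).symm

theorem indepCount_eq_zero_of_card_le {G : SimpleGraph V} (hG : G ≠ ⊥) {k : ℕ}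
    (hk : Fintype.card V ≤ k) : indepCount G k = 0 := by
  classical
  obtain ⟨u, v, huv⟩ := ne_bot_iff_exists_adj.1 hG
  rw [indepCount_eq_card_cliqueFinset_compl, card_eq_zero, cliqueFinset_eq_empty_iff]
  rintro s ⟨hclique, rfl⟩
  have hs : s = univ := s.card_eq_iff_eq_univ.1 (s.card_le_univ.antisymm hk)
  exact (hclique (by simp [hs]) (by simp [hs]) huv.ne).2 huv

theorem card_dvd_indepCount (G : SimpleGraph V) [MulAction.IsPretransitive (G ≃g G) V]
    (hG : G ≠ ⊥) (hV : (Fintype.card V).Prime) {k : ℕ} (hk : k ≠ 0) :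
    Fintype.card V ∣ indepCount G k := by
  obtain hcard | hcard := hV.dvd_mul.1 (card_dvd_mul_indepCount G k)
  · rw [indepCount_eq_zero_of_card_le hG (Nat.le_of_dvd (Nat.pos_of_ne_zero hk) hcard)]
    exact dvd_zero _
  · exact hcard

instance cycleGraph_isPretransitive (n : ℕ) :
    MulAction.IsPretransitive (cycleGraph n ≃g cycleGraph n) (Fin n) where
  exists_smul_eq u v := by
    obtain _ | n := n
    · exact u.elim0
    · refine ⟨⟨Equiv.addRight (v - u), ?_⟩, ?_⟩
      · intro a b
        simp [cycleGraph_eq_circulantGraph]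
      · exact add_sub_cancel u v

theorem prime_dvd_indepCount_cycleGraph {p : ℕ} (hp : p.Prime) {k : ℕ} (hk : k ≠ 0) :
    p ∣ indepCount (cycleGraph p) k := by
  have hbot : cycleGraph p ≠ ⊥ := by
    obtain ⟨m, rfl⟩ := Nat.exists_eq_add_of_le' hp.two_le
    exact ne_bot_iff_exists_adj.2 ⟨0, 1, by simp [cycleGraph_adj]⟩
  simpa using card_dvd_indepCount (cycleGraph p) hbot (by simpa using hp) hk

end VertexTransitive

section IndepPoly

variable {V W : Type*}

theorem isIndepSet_disjSum {G : SimpleGraph V} {H : SimpleGraph W} {s : Finset V} {t : Finset W} :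
    (G ⊕g H).IsIndepSet (s.disjSum t) ↔ G.IsIndepSet s ∧ H.IsIndepSet t := by
  simp [IsIndepSet, Set.Pairwise]

theorem nonempty_iso_induce_sum_induce_compl {G : SimpleGraph V} {S : Set V}
    (hS : ∀ u ∈ S, ∀ v ∉ S, ¬ G.Adj u v) :
    Nonempty (G.induce S ⊕g G.induce Sᶜ ≃g G) := by
  classical
  refine ⟨⟨Equiv.Set.sumCompl S, ?_⟩⟩
  rintro (⟨u, hu⟩ | ⟨u, hu⟩) (⟨v, hv⟩ | ⟨v, hv⟩)
  · simp
  · simpa using hS u hu v hv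
  · simpa [adj_comm] using hS v hv u hu
  · simp

variable [Fintype V] [Fintype W]

open Classical in
/-- The independence polynomial `∑ₖ iₖ(G) Xᵏ`, written as a sum over the independent sets of `G`
so that it is visibly multiplicative over disjoint unions. -/
noncomputable def indepPoly (G : SimpleGraph V) : ℕ[X] :=
  ∑ s ∈ ({s | G.IsIndepSet s} : Finset (Finset V)), X ^ #s

theorem coeff_indepPoly (G : SimpleGraph V) (k : ℕ) : (indepPoly G).coeff k = indepCount G k := by
  classical
  simp only [indepPoly, finsetSum_coeff, coeff_X_pow, sum_boole, filter_filter,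
    indepCount_eq_card_cliqueFinset_compl, Nat.cast_id]
  congr 1 with s
  simp [isNClique_compl, isNIndepSet_iff, eq_comm]

theorem indepPoly_sum (G : SimpleGraph V) (H : SimpleGraph W) :
    indepPoly (G ⊕g H) = indepPoly G * indepPoly H := by
  classical
  rw [indepPoly, indepPoly, indepPoly, sum_mul_sum, ← sum_product']
  refine sum_equiv Finset.sumEquiv.toEquiv (fun u => ?_) (fun u _ => ?_)
  · obtain ⟨⟨s, t⟩, rfl⟩ := Finset.sumEquiv.symm.surjective u
    simp [isIndepSet_disjSum]
  · rw [← pow_add]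
    congr 1
    exact (card_toLeft_add_card_toRight).symm

theorem prime_dvd_card_left_of_dvd_indepCount_sum {p : ℕ} (hp : p.Prime) (G : SimpleGraph V)
    (H : SimpleGraph W) (h : ∀ k ≠ 0, p ∣ indepCount (G ⊕g H) k) : p ∣ Fintype.card V := by
  have := Fact.mk hp
  let φ := Nat.castRingHom (ZMod p)
  have map_sum_eq_one : (indepPoly (G ⊕g H)).map φ = 1 := by
    ext k
    obtain rfl | hk := eq_or_ne k 0
    · simp [coeff_indepPoly, indepCount_zero]
    · simpa [coeff_indepPoly, coeff_one, hk] using (CharP.cast_eq_zero_iff (ZMod p) p _).2 (h k hk)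
  have isUnit_map : IsUnit ((indepPoly G).map φ) :=
    .of_mul_eq_one ((indepPoly H).map φ)
      (by rw [← Polynomial.map_mul, ← indepPoly_sum, map_sum_eq_one])
  have coeff_one_eq_zero : ((indepPoly G).map φ).coeff 1 = 0 :=
    coeff_eq_zero_of_natDegree_lt (by rw [natDegree_eq_zero_of_isUnit isUnit_map]; exact one_pos)
  rw [coeff_map, coeff_indepPoly, indepCount_one] at coeff_one_eq_zero
  exact (CharP.cast_eq_zero_iff (ZMod p) p _).1 coeff_one_eq_zero

theorem connected_of_prime_dvd_indepCount {G : SimpleGraph V} (hV : (Fintype.card V).Prime)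
    (h : ∀ k ≠ 0, Fintype.card V ∣ indepCount G k) : G.Connected := by
  classical
  have : Nonempty V := Fintype.card_pos_iff.1 hV.pos
  refine ⟨fun a b => ?_⟩
  by_contra hab
  let S : Set V := {v | G.Reachable a v}
  obtain ⟨e⟩ := nonempty_iso_induce_sum_induce_compl (G := G) (S := S)
    fun u hu v hv huv => hv (hu.trans huv.reachable)
  have dvd_card_S : Fintype.card V ∣ Fintype.card S :=
    prime_dvd_card_left_of_dvd_indepCount_sum hV (G.induce S) (G.induce Sᶜ)
      fun k hk => by rw [indepCount_congr e]; exact h k hk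
  have card_S_pos : 0 < Fintype.card S := Fintype.card_pos_iff.2 ⟨a, Reachable.refl a⟩
  exact (Nat.le_of_dvd card_S_pos dvd_card_S).not_gt (Fintype.card_subtype_lt (x := b) hab)

end IndepPoly

section DegreeSaturated

variable {V W : Type*} {G : SimpleGraph V}

theorem eq_univ_of_forall_adj_mem (hG : G.Connected) {S : Set V} (hS : S.Nonempty)
    (hadj : ∀ u ∈ S, ∀ v, G.Adj u v → v ∈ S) : S = Set.univ := by
  obtain ⟨u, hu⟩ := hS
  refine Set.eq_univ_of_forall fun v => ?_
  by_contra hv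
  obtain ⟨p⟩ := hG u v
  obtain ⟨d, -, hfst, hsnd⟩ := p.exists_boundary_dart S hu hv
  exact hsnd (hadj _ hfst _ d.adj)

variable [Fintype V] [Fintype W] [DecidableRel G.Adj]

theorem nonempty_iso_of_copy_of_degree_le [Nonempty W] (hG : G.Connected) {H : SimpleGraph W}
    [DecidableRel H.Adj] (f : Copy H G) (hf : ∀ w, G.degree (f w) ≤ H.degree w) :
    Nonempty (H ≃g G) := by
  classical
  have neighborFinset_eq (w : W) :
      (H.neighborFinset w).image f = G.neighborFinset (f w) := by
    refine eq_of_subset_of_card_le ?_ ?_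
    · simp only [image_subset_iff, mem_neighborFinset]
      exact fun w' hw' => f.toHom.map_adj hw'
    · exact (hf w).trans_eq (card_image_of_injective _ f.injective).symm
  have exists_of_adj {w : W} {v : V} (hv : G.Adj (f w) v) : ∃ w', H.Adj w w' ∧ f w' = v := by
    rw [← mem_neighborFinset, ← neighborFinset_eq] at hv
    simpa using hv
  have surjective : Function.Surjective f := Set.range_eq_univ.1 <|
    eq_univ_of_forall_adj_mem hG (Set.range_nonempty f) <| by
      rintro _ ⟨w, rfl⟩ v hv
      obtain ⟨w', -, rfl⟩ := exists_of_adj hv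
      exact ⟨w', rfl⟩
  refine ⟨⟨.ofBijective f ⟨f.injective, surjective⟩, fun {w w'} => ⟨fun h => ?_, f.toHom.map_adj⟩⟩⟩
  obtain ⟨w'', hw'', heq⟩ := exists_of_adj h
  rwa [f.injective heq] at hw''

theorem nonempty_iso_cycleGraph (hG : G.Connected) (hdeg : ∀ v, G.degree v = 2) :
    Nonempty (G ≃g cycleGraph (Fintype.card V)) := by
  have : Nonempty V := hG.nonempty
  have : Nontrivial V := by
    obtain ⟨v⟩ := this
    obtain ⟨u, hu⟩ := (G.degree_pos_iff_exists_adj v).1 (by simp [hdeg])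
    exact ⟨v, u, hu.ne⟩
  have not_acyclic : ¬ G.IsAcyclic := fun hacyclic => by
    obtain ⟨v, hv⟩ := IsTree.exists_vert_degree_one_of_nontrivial ⟨hG, hacyclic⟩
    simp [hdeg] at hv
  rw [isAcyclic_iff_free_cycleGraph] at not_acyclic
  push Not at not_acyclic
  obtain ⟨n, hn, hcycle⟩ := not_acyclic
  obtain ⟨m, rfl⟩ := Nat.exists_eq_add_of_le' hn
  obtain ⟨f⟩ := hcycle
  obtain ⟨e⟩ := nonempty_iso_of_copy_of_degree_le hG f
    fun w => by rw [hdeg, cycleGraph_degree_three_le]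
  rw [← Fintype.card_congr e.toEquiv, Fintype.card_fin]
  exact ⟨e.symm⟩

theorem eq_univ_of_isNClique_of_degree_lt (hG : G.Connected) {n : ℕ} {s : Finset V}
    (hs : G.IsNClique n s) (hne : s.Nonempty) (hdeg : ∀ v ∈ s, G.degree v < n) : s = univ := by
  classical
  refine coe_eq_univ.1 (eq_univ_of_forall_adj_mem hG hne fun u hu v huv => ?_)
  by_contra hv
  have subset_neighborFinset : insert v (s.erase u) ⊆ G.neighborFinset u := by
    intro w hw
    obtain rfl | hw := mem_insert.1 hw
    · simpa using huv
    · simpa using hs.isClique hu (mem_of_mem_erase hw) (ne_of_mem_erase hw).symm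
  have card_le := card_le_card subset_neighborFinset
  rw [card_insert_of_notMem fun h => hv (mem_of_mem_erase h), card_erase_add_one hu,
    hs.card_eq] at card_le
  exact (hdeg u hu).not_ge card_le

end DegreeSaturated

section Path

variable {V : Type*} {G : SimpleGraph V}

theorem exists_adj_dist_eq (hG : G.Connected) {a v : V} {k : ℕ} (hv : G.dist a v = k + 1) :
    ∃ u, G.Adj u v ∧ G.dist a u = k := by
  obtain ⟨p, hp⟩ := hG.exists_walk_length_eq_dist v a
  rw [dist_comm, hv] at hp
  cases p with
  | nil => simp at hp
  | @cons _ u _ hvu q =>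
    refine ⟨u, hvu.symm, ?_⟩
    have dist_le := G.dist_le q
    rw [dist_comm] at dist_le
    rw [Walk.length_cons] at hp
    have dist_diff := hvu.diff_dist_adj (u := a)
    omega

variable [Fintype V]

theorem dist_lt_card (hG : G.Connected) (u v : V) : G.dist u v < Fintype.card V := by
  obtain ⟨p, hp, hlen⟩ := hG.exists_path_of_dist u v
  exact hlen ▸ hp.length_lt

variable [DecidableRel G.Adj]

theorem eq_of_degree_le_one {a x y : V} (ha : G.degree a ≤ 1) (hx : G.Adj a x) (hy : G.Adj a y) :
    x = y :=
  card_le_one.1 ha x (by simpa using hx) y (by simpa using hy)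

theorem eq_of_degree_le_two {a x y z : V} (ha : G.degree a ≤ 2) (hx : G.Adj a x) (hy : G.Adj a y)
    (hz : G.Adj a z) : x = y ∨ x = z ∨ y = z := by
  by_contra! hne
  refine ha.not_gt (two_lt_card.2 ⟨x, ?_, y, ?_, z, ?_, hne⟩) <;> simpa

theorem dist_injective (hG : G.Connected) (hdeg : ∀ v, G.degree v ≤ 2) {a : V}
    (ha : G.degree a ≤ 1) : Function.Injective (G.dist a) := by
  suffices h : ∀ k u v, G.dist a u = k → G.dist a v = k → u = v from
    fun u v huv => h _ u v rfl huv.symm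
  intro k
  induction k with
  | zero =>
    intro u v hu hv
    rw [← hG.dist_eq_zero_iff.1 hu, hG.dist_eq_zero_iff.1 hv]
  | succ k ih =>
    intro u v hu hv
    obtain ⟨w, hwu, hw⟩ := exists_adj_dist_eq hG hu
    obtain ⟨w', hwv, hw'⟩ := exists_adj_dist_eq hG hv
    obtain rfl := ih w w' hw hw'
    cases k with
    | zero =>
      obtain rfl := hG.dist_eq_zero_iff.1 hw
      exact eq_of_degree_le_one ha hwu hwv
    | succ j =>
      obtain ⟨x, hxw, hx⟩ := exists_adj_dist_eq hG hw
      obtain h | rfl | rfl := eq_of_degree_le_two (hdeg w) hwu hwv hxw.symm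
      · exact h
      · omega
      · omega

theorem exists_iso_pathGraph (hG : G.Connected) (hdeg : ∀ v, G.degree v ≤ 2) {a : V}
    (ha : G.degree a ≤ 1) : ∃ f : G ≃g pathGraph (Fintype.card V), (f a).val = 0 := by
  have injective := dist_injective hG hdeg ha
  let f : V ≃ Fin (Fintype.card V) := .ofBijective (fun v => ⟨G.dist a v, dist_lt_card hG a v⟩) <|
    (Fintype.bijective_iff_injective_and_card _).2
      ⟨fun u v huv => injective (Fin.ext_iff.1 huv), by simp⟩
  have adj_of_dist {u v : V} (huv : G.dist a u + 1 = G.dist a v) : G.Adj u v := by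
    obtain ⟨w, hwv, hw⟩ := exists_adj_dist_eq hG huv.symm
    rwa [← injective hw]
  refine ⟨⟨f, fun {u v} => ?_⟩, dist_self⟩
  rw [pathGraph_adj]
  refine ⟨?_, fun huv => ?_⟩
  · rintro (h | h)
    · exact adj_of_dist h
    · exact (adj_of_dist h).symm
  · have dist_ne : G.dist a u ≠ G.dist a v := injective.ne huv.ne
    have dist_diff := huv.diff_dist_adj (u := a)
    change G.dist a u + 1 = G.dist a v ∨ G.dist a v + 1 = G.dist a u
    omega

end Path

section Triangle

variable {V : Type*} {G : SimpleGraph V}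

theorem not_isBridge_of_isNClique_three {a b c : V} [DecidableEq V]
    (habc : G.IsNClique 3 {a, b, c}) : ¬ G.IsBridge s(a, c) := by
  obtain ⟨hab, hac, hbc⟩ := is3Clique_triple_iff.1 habc
  rw [isBridge_iff, not_not]
  have hab' : (G.deleteEdges {s(a, c)}).Adj a b := by
    simp [deleteEdges_adj, hab, hbc.ne, hac.ne]
  have hbc' : (G.deleteEdges {s(a, c)}).Adj b c := by
    simp [deleteEdges_adj, hbc, hab.ne', hac.ne']
  exact hab'.reachable.trans hbc'.reachable

variable [Fintype V] [DecidableRel G.Adj]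

theorem degree_lt_of_le_of_adj_of_not_adj {H : SimpleGraph V} [DecidableRel H.Adj] (hle : H ≤ G)
    {v w : V} (hG : G.Adj v w) (hH : ¬ H.Adj v w) : H.degree v < G.degree v := by
  refine card_lt_card ⟨fun u hu => ?_, fun h => hH ?_⟩
  · rw [mem_neighborFinset] at hu ⊢
    exact hle hu
  · simpa using h ((G.mem_neighborFinset v w).2 hG)

theorem isTree_deleteEdges_of_not_isBridge (hG : G.Connected)
    (hcard : #G.edgeFinset = Fintype.card V) {a b : V} (hab : G.Adj a b)
    (hbridge : ¬ G.IsBridge s(a, b)) : (G.deleteEdges {s(a, b)}).IsTree := by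
  classical
  refine isTree_iff_connected_and_card.2
    ⟨hG.connected_delete_edge_of_not_isBridge hbridge, ?_⟩
  rw [edgeSet_deleteEdges, Nat.card_coe_set_eq,
    Set.ncard_sdiff_singleton_add_one (G.mem_edgeSet.2 hab), ← coe_edgeFinset, Set.ncard_coe_finset,
    hcard, Nat.card_eq_fintype_card]

theorem card_cliqueFinset_three_le_one [DecidableEq V] (hG : G.Connected)
    (hcard : #G.edgeFinset = Fintype.card V) : #(G.cliqueFinset 3) ≤ 1 := by
  refine card_le_one.2 fun s hs t ht => ?_
  rw [mem_cliqueFinset_iff] at hs ht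
  by_contra hst
  obtain ⟨x, hxs, hxt⟩ : ∃ x ∈ s, x ∉ t := not_subset.1 fun hsub =>
    hst (eq_of_subset_of_card_le hsub (by rw [hs.card_eq, ht.card_eq]))
  obtain ⟨z, y, hzy, hs_erase⟩ := card_eq_two.1 (by rw [card_erase_of_mem hxs, hs.card_eq])
  have hs_eq : s = {x, z, y} := by rw [← hs_erase, insert_erase hxs]
  rw [hs_eq] at hs
  have tree := isTree_deleteEdges_of_not_isBridge hG hcard (is3Clique_triple_iff.1 hs).2.1
    (not_isBridge_of_isNClique_three hs)
  refine tree.isAcyclic.cliqueFree le_rfl t ⟨fun u hu v hv huv => ?_, ht.card_eq⟩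
  refine deleteEdges_adj.2 ⟨ht.isClique hu hv huv, fun h => hxt ?_⟩
  obtain ⟨rfl, -⟩ | ⟨-, rfl⟩ := Sym2.eq_iff.1 h
  · exact hu
  · exact hv

theorem dGraph_adj {n : ℕ} {u v : Fin n} :
    (dGraph n).Adj u v ↔ (pathGraph n).Adj u v ∨
      (u.val = 0 ∧ v.val = 2) ∨ (u.val = 2 ∧ v.val = 0) := by
  rw [dGraph, fromRel_adj, pathGraph_adj, Ne, Fin.ext_iff]
  omega

theorem nonempty_iso_dGraph [DecidableEq V] (hG : G.Connected) {a b c : V}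
    (habc : G.IsNClique 3 {a, b, c}) (hc : G.degree c ≤ 3) (hdeg : ∀ v ≠ c, G.degree v ≤ 2) :
    Nonempty (G ≃g dGraph (Fintype.card V)) := by
  classical
  obtain ⟨hab, hac, hbc⟩ := is3Clique_triple_iff.1 habc
  let H := G.deleteEdges {s(a, c)}
  have hle : H ≤ G := deleteEdges_le _
  have hH : H.Connected :=
    hG.connected_delete_edge_of_not_isBridge (not_isBridge_of_isNClique_three habc)
  have degree_a_lt : H.degree a < G.degree a :=
    degree_lt_of_le_of_adj_of_not_adj hle hac (by simp [H])
  have degree_c_lt : H.degree c < G.degree c :=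
    degree_lt_of_le_of_adj_of_not_adj hle hac.symm (by simp [H, Sym2.eq_swap])
  have hdegH (v : V) : H.degree v ≤ 2 := by
    obtain rfl | hv := eq_or_ne v c
    · omega
    · exact (degree_le_of_le hle).trans (hdeg v hv)
  obtain ⟨f, hfa⟩ := exists_iso_pathGraph hH hdegH (a := a) (by have := hdeg a hac.ne; omega)
  have hfc : (f c).val = 2 := by
    have hHab : H.Adj a b := by simp [H, deleteEdges_adj, hab, hbc.ne, hac.ne]
    have hHbc : H.Adj b c := by simp [H, deleteEdges_adj, hbc, hab.ne', hac.ne']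
    have hfca : (f c).val ≠ (f a).val := fun h => hac.ne' (f.injective (Fin.ext h))
    rw [← f.map_adj_iff, pathGraph_adj] at hHab hHbc
    omega
  have eq_a_iff (w : V) : w = a ↔ (f w).val = 0 := by
    rw [← hfa, ← Fin.ext_iff, f.injective.eq_iff]
  have eq_c_iff (w : V) : w = c ↔ (f w).val = 2 := by
    rw [← hfc, ← Fin.ext_iff, f.injective.eq_iff]
  have adj_iff (u v : V) : G.Adj u v ↔ H.Adj u v ∨ u = a ∧ v = c ∨ u = c ∧ v = a := by
    rw [← Sym2.eq_iff, deleteEdges_adj, Set.mem_singleton_iff]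
    refine ⟨fun huv => or_iff_not_imp_right.2 fun h => ⟨huv, h⟩, ?_⟩
    rintro (h | h)
    · exact h.1
    · rwa [← mem_edgeSet, h, mem_edgeSet]
  refine ⟨⟨f.toEquiv, fun {u v} => ?_⟩⟩
  rw [dGraph_adj, adj_iff, eq_a_iff, eq_a_iff, eq_c_iff, eq_c_iff, ← f.map_adj_iff]
  rfl

end Triangle

section DegreeSum

variable {V : Type*} [Fintype V] {G : SimpleGraph V}

theorem cycleGraph_degree_eq_two {n : ℕ} (hn : 3 ≤ n) [DecidableRel (cycleGraph n).Adj]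
    (v : Fin n) : (cycleGraph n).degree v = 2 := by
  obtain ⟨m, rfl⟩ := Nat.exists_eq_add_of_le' hn
  rw [← cycleGraph_degree_three_le (v := v)]
  congr!

theorem card_edgeFinset_cycleGraph {n : ℕ} (hn : 3 ≤ n) [DecidableRel (cycleGraph n).Adj] :
    #(cycleGraph n).edgeFinset = n := by
  have sum_degrees := sum_degrees_eq_twice_card_edges (cycleGraph n)
  simp only [cycleGraph_degree_eq_two hn, sum_const, card_univ, Fintype.card_fin,
    smul_eq_mul] at sum_degrees
  omega

theorem sub_one_mul_sub_two_nonneg (d : ℤ) : 0 ≤ (d - 1) * (d - 2) := by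
  obtain h | h := le_or_gt d 1
  · exact mul_nonneg_of_nonpos_of_nonpos (by omega) (by omega)
  · exact mul_nonneg (by omega) (by omega)

variable [DecidableRel G.Adj]

theorem degree_eq_two_of_sum_nonpos (hcard : #G.edgeFinset = Fintype.card V)
    (hsum : ∑ v, ((G.degree v - 1) * (G.degree v - 2) : ℤ) ≤ 0) (v : V) : G.degree v = 2 := by
  have degree_le (v : V) : G.degree v ≤ 2 := by
    have eq_zero := (sum_eq_zero_iff_of_nonneg fun v _ => sub_one_mul_sub_two_nonneg _).1
      (hsum.antisymm <| sum_nonneg fun v _ => sub_one_mul_sub_two_nonneg _) v (mem_univ v)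
    obtain h | h := mul_eq_zero.1 eq_zero <;> omega
  refine (sum_eq_sum_iff_of_le fun v _ => degree_le v).1 ?_ v (mem_univ v)
  rw [sum_degrees_eq_twice_card_edges, hcard, sum_const, card_univ, smul_eq_mul, mul_comm]

theorem exists_degree_le_three_of_sum_le_two [Nonempty V]
    (hsum : ∑ v, ((G.degree v - 1) * (G.degree v - 2) : ℤ) ≤ 2) :
    ∃ c, G.degree c ≤ 3 ∧ ∀ v ≠ c, G.degree v ≤ 2 := by
  classical
  obtain ⟨c, hc⟩ := Finite.exists_max fun v => G.degree v
  have pair_le {v : V} (hv : v ≠ c) : ((G.degree v - 1) * (G.degree v - 2) : ℤ) +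
      (G.degree c - 1) * (G.degree c - 2) ≤ 2 := by
    rw [← sum_pair (f := fun w => ((G.degree w - 1) * (G.degree w - 2) : ℤ)) hv]
    exact (sum_le_univ_sum_of_nonneg fun v => sub_one_mul_sub_two_nonneg _).trans hsum
  have single_le := (single_le_sum (fun v _ => sub_one_mul_sub_two_nonneg (G.degree v))
    (mem_univ c)).trans hsum
  refine ⟨c, ?_, fun v hv => ?_⟩
  · by_contra! four_le
    zify at four_le
    nlinarith
  · have le_max := hc v
    have le_two := pair_le hv
    by_contra! three_le
    zify at le_max three_le
    nlinarith

theorem nonempty_iso_dGraph_of_sum_le_two (hG : G.Connected) {s : Finset V}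
    (hs : G.IsNClique 3 s) (hsum : ∑ v, ((G.degree v - 1) * (G.degree v - 2) : ℤ) ≤ 2) :
    Nonempty (G ≃g dGraph (Fintype.card V)) := by
  classical
  have := hG.nonempty
  obtain ⟨c, hc, hdeg⟩ := exists_degree_le_three_of_sum_le_two hsum
  have mem_s : c ∈ s := by
    by_contra hcs
    refine hcs (eq_univ_of_isNClique_of_degree_lt hG hs ?_ (fun v hv => ?_) ▸ mem_univ c)
    · exact card_pos.1 (hs.card_eq ▸ three_pos)
    · exact Nat.lt_succ_of_le (hdeg v (ne_of_mem_of_not_mem hv hcs))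
  obtain ⟨a, b, -, hab⟩ := card_eq_two.1 (by rw [card_erase_of_mem mem_s, hs.card_eq])
  refine nonempty_iso_dGraph hG (a := a) (b := b) ?_ hc hdeg
  rwa [show ({a, b, c} : Finset V) = insert c {a, b} by grind, ← hab, insert_erase mem_s]

theorem card_edgeFinset_eq_card_of_indepCount_eq {n : ℕ} (hn : 3 ≤ n)
    (h₁ : indepCount G 1 = indepCount (cycleGraph n) 1)
    (h₂ : indepCount G 2 = indepCount (cycleGraph n) 2) : #G.edgeFinset = Fintype.card V := by
  classical
  have hG := card_edgeFinset_add_indepCount_two G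
  have hC := card_edgeFinset_add_indepCount_two (cycleGraph n)
  rw [indepCount_one, indepCount_one] at h₁
  rw [card_edgeFinset_cycleGraph hn, ← h₂, ← h₁, ← hG, add_left_inj] at hC
  rw [← hC, h₁, Fintype.card_fin]

theorem sum_degree_sub_one_mul_sub_two_le [DecidableEq V] {n : ℕ} (hn : 3 ≤ n)
    (h₁ : indepCount G 1 = indepCount (cycleGraph n) 1)
    (h₂ : indepCount G 2 = indepCount (cycleGraph n) 2)
    (h₃ : indepCount G 3 = indepCount (cycleGraph n) 3) :
    ∑ v, ((G.degree v - 1) * (G.degree v - 2) : ℤ) ≤ 2 * #(G.cliqueFinset 3) := by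
  have card_edges := card_edgeFinset_eq_card_of_indepCount_eq hn h₁ h₂
  have card_eq : Fintype.card V = n := by
    rw [← indepCount_one G, h₁, indepCount_one, Fintype.card_fin]
  have sum_sq_le : ∑ v, G.degree v ^ 2 ≤ 4 * n + 2 * #(G.cliqueFinset 3) := by
    have hG := sum_degree_sq_add G
    have hC := sum_degree_sq_add (cycleGraph n)
    simp only [cycleGraph_degree_eq_two hn, card_edgeFinset_cycleGraph hn, sum_const, card_univ,
      Fintype.card_fin, smul_eq_mul] at hC
    rw [card_edges, card_eq, h₃] at hG
    omega
  have sum_degrees : ∑ v, G.degree v = 2 * n := by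
    rw [sum_degrees_eq_twice_card_edges, card_edges, card_eq]
  have expand (v : V) : ((G.degree v - 1) * (G.degree v - 2) : ℤ) =
      G.degree v ^ 2 - 3 * G.degree v + 2 := by ring
  simp only [expand, sum_add_distrib, sum_sub_distrib, ← mul_sum, sum_const, card_univ, card_eq,
    nsmul_eq_mul]
  zify at sum_sq_le sum_degrees
  linarith

end DegreeSum

theorem nonempty_iso_of_connected_of_indepCount_eq {V : Type*} [Fintype V] {G : SimpleGraph V}
    (hG : G.Connected) {n : ℕ} (hn : 3 ≤ n) (h₁ : indepCount G 1 = indepCount (cycleGraph n) 1)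
    (h₂ : indepCount G 2 = indepCount (cycleGraph n) 2)
    (h₃ : indepCount G 3 = indepCount (cycleGraph n) 3) :
    Nonempty (G ≃g cycleGraph n) ∨ Nonempty (G ≃g dGraph n) := by
  classical
  have card_edges := card_edgeFinset_eq_card_of_indepCount_eq hn h₁ h₂
  have sum_le := sum_degree_sub_one_mul_sub_two_le hn h₁ h₂ h₃
  obtain rfl : Fintype.card V = n := by
    rw [← indepCount_one G, h₁, indepCount_one, Fintype.card_fin]
  obtain no_triangle | ⟨s, hs⟩ := (G.cliqueFinset 3).eq_empty_or_nonempty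
  · rw [no_triangle, card_empty] at sum_le
    exact .inl <| nonempty_iso_cycleGraph hG <| degree_eq_two_of_sum_nonpos card_edges sum_le
  · have triangles_le := card_cliqueFinset_three_le_one hG card_edges
    exact .inr <| nonempty_iso_dGraph_of_sum_le_two hG (mem_cliqueFinset_iff.1 hs) (by omega)

theorem indepEquiv_primeCycle {V : Type*} [Fintype V] (G : SimpleGraph V) (p : ℕ)
    (hp : p.Prime) (hodd : Odd p)
    (h : ∀ k, indepCount G k = indepCount (SimpleGraph.cycleGraph p) k) :
    Nonempty (G ≃g SimpleGraph.cycleGraph p) ∨ Nonempty (G ≃g dGraph p) := by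
  have card_eq : Fintype.card V = p := by
    rw [← indepCount_one G, h, indepCount_one, Fintype.card_fin]
  have hG : G.Connected := connected_of_prime_dvd_indepCount (card_eq.symm ▸ hp) fun k hk => by
    rw [card_eq, h]
    exact prime_dvd_indepCount_cycleGraph hp hk
  have three_le : 3 ≤ p := by
    have := hp.two_le
    grind
  exact nonempty_iso_of_connected_of_indepCount_eq hG three_le (h 1) (h 2) (h 3)
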